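/- Let A and à be symmetric block 2×2 matrices built from the 3D interior-mode discretization: A = [[A¹¹, A¹²],[A²¹, A²²]] and à = [[á¹,Ã¹²],[Ã²¹,Ã²²]] as defined from Kronecker products of M, S, M^{−1}, I (with à obtained from A by replacing every occurrence of S with M^{−1}). Then the solution space of A x = à x in ℝ^{2(N−1)³} has dimension at least 2(N−3)³. -/

import Mathlib

open Polynomial

/-- The Legendre polynomial of degree `n` (Rodrigues formula). -/
noncomputable def legendre (n : ℕ) : Polynomial ℝ :=
  C ((1 : ℝ) / (2 ^ n * n.factorial)) * derivative^[n] ((X ^ 2 - 1) ^ n)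

/-- `ψ_{m+1}(ξ) = (1/√(2(2m+1))) (L_{m+1}(ξ) − L_{m−1}(ξ))`. -/
noncomputable def psiF (m : ℕ) (x : ℝ) : ℝ :=
  (Real.sqrt (2 * (2 * (m : ℝ) + 1)))⁻¹ *
    ((legendre (m + 1)).eval x - (legendre (m - 1)).eval x)

/-- The normalized Legendre function `φ_m(ξ) = √((2m+1)/2) L_m(ξ)`. -/
noncomputable def phiF (m : ℕ) (x : ℝ) : ℝ :=
  Real.sqrt ((2 * (m : ℝ) + 1) / 2) * (legendre m).eval x

/-- The `(N−1)×(N−1)` mass matrix `M_{mn} = ∫ ψ_{n+1} ψ_{m+1}`,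
with index `i : Fin (N−1)` corresponding to `m = i + 1`. -/
noncomputable def massMatrix (N : ℕ) : Matrix (Fin (N - 1)) (Fin (N - 1)) ℝ :=
  Matrix.of fun i j => ∫ x in (-1 : ℝ)..1, psiF ((j : ℕ) + 1) x * psiF ((i : ℕ) + 1) x

/-- The `(N−1)×(N−1)` stiffness matrix `S_{mn} = ∫ φ_n' φ_m'`. -/
noncomputable def stiffMatrix (N : ℕ) : Matrix (Fin (N - 1)) (Fin (N - 1)) ℝ :=
  Matrix.of fun i j =>
    ∫ x in (-1 : ℝ)..1, deriv (phiF ((j : ℕ) + 1)) x * deriv (phiF ((i : ℕ) + 1)) x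

open scoped Kronecker

/-- The symmetric block 2×2 matrix `[[A¹¹,A¹²],[A²¹,A²²]]` of the 3D interior-mode
discretization, built from Kronecker products of `M`, `T`, `I`, where `T` stands for
the stiffness matrix `S` (for `A`) or for `M⁻¹` (for `Ã`). -/
noncomputable def interiorBlock (N : ℕ) (κ : ℝ)
    (T : Matrix (Fin (N - 1)) (Fin (N - 1)) ℝ) :
    Matrix ((Fin (N - 1) × Fin (N - 1) × Fin (N - 1)) ⊕
        (Fin (N - 1) × Fin (N - 1) × Fin (N - 1)))
      ((Fin (N - 1) × Fin (N - 1) × Fin (N - 1)) ⊕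
        (Fin (N - 1) × Fin (N - 1) × Fin (N - 1))) ℝ :=
  let M := massMatrix N
  let I1 : Matrix (Fin (N - 1)) (Fin (N - 1)) ℝ := 1
  let A11 := T ⊗ₖ (M ⊗ₖ I1) + T ⊗ₖ (I1 ⊗ₖ M) + I1 ⊗ₖ (M ⊗ₖ T) + I1 ⊗ₖ (T ⊗ₖ M) +
    (2 : ℝ) • (I1 ⊗ₖ (I1 ⊗ₖ I1)) + κ • (I1 ⊗ₖ (I1 ⊗ₖ M) + I1 ⊗ₖ (M ⊗ₖ I1))
  let A22 := M ⊗ₖ (T ⊗ₖ I1) + T ⊗ₖ (I1 ⊗ₖ M) + M ⊗ₖ (I1 ⊗ₖ T) + I1 ⊗ₖ (T ⊗ₖ M) +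
    (2 : ℝ) • (I1 ⊗ₖ (I1 ⊗ₖ I1)) + κ • (I1 ⊗ₖ (I1 ⊗ₖ M) + M ⊗ₖ (I1 ⊗ₖ I1))
  let A12 := T ⊗ₖ (I1 ⊗ₖ M) + I1 ⊗ₖ (T ⊗ₖ M) + I1 ⊗ₖ (I1 ⊗ₖ I1) +
    κ • (I1 ⊗ₖ (I1 ⊗ₖ M))
  Matrix.fromBlocks A11 A12 A12 A22

/-- The `L²(-1,1)` inner product on polynomials, as a bilinear map. -/
noncomputable def ipL : ℝ[X] →ₗ[ℝ] ℝ[X] →ₗ[ℝ] ℝ :=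
  LinearMap.mk₂ ℝ (fun p q => ∫ x in (-1 : ℝ)..1, p.eval x * q.eval x)
    (by
      intro p p' q
      rw [← intervalIntegral.integral_add]
      · simp only [eval_add, add_mul]
      · exact (p.continuous.mul q.continuous).intervalIntegrable _ _
      · exact (p'.continuous.mul q.continuous).intervalIntegrable _ _)
    (by
      intro c p q
      simp only [eval_smul, smul_eq_mul, mul_assoc, intervalIntegral.integral_const_mul])
    (by
      intro p q q'
      rw [← intervalIntegral.integral_add]
      · simp only [eval_add, mul_add]
      · exact (p.continuous.mul q.continuous).intervalIntegrable _ _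
      · exact (p.continuous.mul q'.continuous).intervalIntegrable _ _)
    (by
      intro c p q
      simp only [eval_smul, smul_eq_mul, mul_left_comm, intervalIntegral.integral_const_mul])

lemma ipL_apply (p q : ℝ[X]) : ipL p q = ∫ x in (-1 : ℝ)..1, p.eval x * q.eval x := rfl

lemma ipL_comm (p q : ℝ[X]) : ipL p q = ipL q p := by
  simp only [ipL_apply, mul_comm]

lemma ipL_parts (p q : ℝ[X]) (h1 : p.eval 1 = 0) (h2 : p.eval (-1) = 0) :
    ipL (derivative p) q = - ipL p (derivative q) := by
  have h := intervalIntegral.integral_mul_deriv_eq_deriv_mul (a := (-1 : ℝ)) (b := 1)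
    (u := fun x => p.eval x) (v := fun x => q.eval x)
    (u' := fun x => (derivative p).eval x) (v' := fun x => (derivative q).eval x)
    (fun x _ => p.hasDerivAt x) (fun x _ => q.hasDerivAt x)
    ((derivative p).continuous.intervalIntegrable _ _)
    ((derivative q).continuous.intervalIntegrable _ _)
  rw [h1, h2] at h
  rw [ipL_apply, ipL_apply, h]
  ring

lemma ipL_self_eq_zero (p : ℝ[X]) (h : ipL p p = 0) : p = 0 := by
  by_contra hp
  have : ∃ c ∈ Set.Icc (-1 : ℝ) 1, p.eval c ≠ 0 := by
    by_contra! hc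
    apply hp
    apply eq_zero_of_infinite_isRoot
    exact (Set.Icc_infinite (by norm_num : (-1 : ℝ) < 1)).mono (fun x hx => hc x hx)
  obtain ⟨c, hc, hpc⟩ := this
  have := intervalIntegral.integral_pos (a := (-1 : ℝ)) (b := 1)
    (f := fun x => p.eval x * p.eval x) (by norm_num)
    (p.continuous.mul p.continuous).continuousOn
    (fun x _ => mul_self_nonneg _) ⟨c, hc, mul_self_pos.2 hpc⟩
  rw [ipL_apply] at h
  linarith

lemma eval_iter_zero (n k : ℕ) (h : k < n) (a : ℝ) (ha : a ^ 2 = 1) :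
    (derivative^[k] ((X ^ 2 - 1 : ℝ[X]) ^ n)).eval a = 0 := by
  have h1 : (X ^ 2 - 1 : ℝ[X]) ∣ derivative^[k] ((X ^ 2 - 1 : ℝ[X]) ^ n) :=
    (dvd_pow_self _ (by omega)).trans (pow_sub_dvd_iterate_derivative_pow _ n k)
  obtain ⟨r, hr⟩ := h1
  rw [hr]
  simp [ha]

lemma ipL_iter (n k : ℕ) (h : k ≤ n) (q : ℝ[X]) :
    ipL (derivative^[n] ((X ^ 2 - 1 : ℝ[X]) ^ n)) q =
      (-1) ^ k * ipL (derivative^[n - k] ((X ^ 2 - 1 : ℝ[X]) ^ n)) (derivative^[k] q) := by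
  induction k with
  | zero => simp
  | succ k ih =>
    rw [ih (by omega)]
    obtain ⟨j, hj⟩ : ∃ j, n - k = j + 1 := ⟨n - k - 1, by omega⟩
    have hj' : n - (k + 1) = j := by omega
    rw [hj, hj', Function.iterate_succ_apply', ipL_parts, Function.iterate_succ_apply' _ k]
    · ring
    · exact eval_iter_zero _ _ (by omega) _ (by norm_num)
    · exact eval_iter_zero _ _ (by omega) _ (by norm_num)

lemma leg_eq_smul (n : ℕ) : legendre n =
    ((1 : ℝ) / (2 ^ n * n.factorial)) • derivative^[n] ((X ^ 2 - 1 : ℝ[X]) ^ n) := by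
  rw [legendre, smul_eq_C_mul]

lemma leg_orth (n : ℕ) (q : ℝ[X]) (hq : q.natDegree < n) : ipL (legendre n) q = 0 := by
  rw [leg_eq_smul, map_smul, LinearMap.smul_apply, ipL_iter n n le_rfl,
    iterate_derivative_eq_zero hq]
  simp

lemma natDegree_iter (p : ℝ[X]) (k : ℕ) : (derivative^[k] p).natDegree = p.natDegree - k := by
  induction k with
  | zero => simp
  | succ k ih => rw [Function.iterate_succ_apply', natDegree_derivative, ih]; omega

lemma leg_natDegree (n : ℕ) : (legendre n).natDegree = n := by
  rw [legendre, natDegree_C_mul (by positivity), natDegree_iter, natDegree_pow]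
  have : (X ^ 2 - 1 : ℝ[X]).natDegree = 2 := by
    simpa using natDegree_X_pow_sub_C (R := ℝ) (n := 2) (r := 1)
  rw [this]; omega

lemma leg_diff (m : ℕ) : legendre (m + 2) - legendre m =
    ((2 * ((m : ℝ) + 1) + 1) / (2 ^ (m + 1) * (m + 1).factorial)) •
      derivative^[m] ((X ^ 2 - 1 : ℝ[X]) ^ (m + 1)) := by
  have key : derivative (derivative ((X ^ 2 - 1 : ℝ[X]) ^ (m + 2))) =
      (2 * ((m : ℝ) + 2) * (2 * ((m : ℝ) + 1) + 1)) • (X ^ 2 - 1 : ℝ[X]) ^ (m + 1)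
      + (4 * ((m : ℝ) + 1) * ((m : ℝ) + 2)) • (X ^ 2 - 1 : ℝ[X]) ^ m := by
    simp only [derivative_pow, derivative_sub, derivative_mul, derivative_X, derivative_one,
      derivative_C, smul_eq_C_mul]
    have c4 : (C 4 : ℝ[X]) = 4 := rfl
    have c2 : (C 2 : ℝ[X]) = 2 := rfl
    simp [c2, c4]
    ring
  rw [leg_eq_smul (m + 2), leg_eq_smul m, Function.iterate_add_apply derivative m 2]
  change _ • derivative^[m] (derivative (derivative _)) - _ = _
  rw [key, iterate_map_add, iterate_derivative_smul, iterate_derivative_smul, smul_add,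
    smul_smul, smul_smul, add_sub_assoc, ← sub_smul]
  have e1 : (1 : ℝ) / (2 ^ (m + 2) * (m + 2).factorial) *
      (2 * ((m : ℝ) + 2) * (2 * ((m : ℝ) + 1) + 1)) =
      (2 * ((m : ℝ) + 1) + 1) / (2 ^ (m + 1) * (m + 1).factorial) := by
    rw [Nat.factorial_succ (m + 1)]
    have : ((m + 1).factorial : ℝ) ≠ 0 := by positivity
    have : (m : ℝ) + 2 ≠ 0 := by positivity
    push_cast
    rw [show (m : ℝ) + 1 + 1 = m + 2 by ring]
    field_simp
    try ring
  have e2 : (1 : ℝ) / (2 ^ (m + 2) * (m + 2).factorial) *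
      (4 * ((m : ℝ) + 1) * ((m : ℝ) + 2)) - 1 / (2 ^ m * m.factorial) = 0 := by
    rw [Nat.factorial_succ (m + 1), Nat.factorial_succ m]
    have : (m.factorial : ℝ) ≠ 0 := by positivity
    have : (m : ℝ) + 2 ≠ 0 := by positivity
    have : (m : ℝ) + 1 ≠ 0 := by positivity
    push_cast
    rw [show (m : ℝ) + 1 + 1 = m + 2 by ring]
    field_simp
    try ring
  rw [e1, e2]; simp

lemma leg_diff_deriv (m : ℕ) : derivative (legendre (m + 2) - legendre m) =
    (2 * ((m : ℝ) + 1) + 1) • legendre (m + 1) := by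
  rw [leg_diff, leg_eq_smul, derivative_smul, smul_smul, Function.iterate_succ_apply']
  congr 1
  ring

lemma leg_diff_eval (m : ℕ) (a : ℝ) (ha : a ^ 2 = 1) :
    (legendre (m + 2) - legendre m).eval a = 0 := by
  rw [leg_diff, eval_smul, eval_iter_zero _ _ (by omega) _ ha, smul_zero]

lemma leg_zero : legendre 0 = 1 := by simp [legendre]

lemma leg_one : legendre 1 = X := by
  rw [leg_eq_smul]
  have : derivative^[1] ((X ^ 2 - 1 : ℝ[X]) ^ 1) = (2 : ℝ) • X := by
    have c2 : (C 2 : ℝ[X]) = 1 + 1 := by rw [one_add_one_eq_two]; rfl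
    simp [smul_eq_C_mul, c2]
  rw [this, smul_smul]
  simp

lemma leg_norm (m : ℕ) : (2 * (m : ℝ) + 1) * ipL (legendre m) (legendre m) = 2 := by
  induction m with
  | zero => simp [leg_zero, ipL_apply]; norm_num
  | succ m ih =>
    have h1 : (2 * ((m : ℝ) + 1) + 1) * ipL (legendre (m + 1)) (legendre (m + 1)) =
        ipL (legendre m) (derivative (legendre (m + 1))) := by
      rw [← smul_eq_mul, ← LinearMap.smul_apply, ← map_smul, ← leg_diff_deriv, ipL_parts _ _
        (leg_diff_eval m 1 (by norm_num)) (leg_diff_eval m (-1) (by norm_num)), map_sub,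
        LinearMap.sub_apply, leg_orth (m + 2)]
      · ring
      · rw [natDegree_derivative, leg_natDegree]; omega
    push_cast
    rw [h1, ← ih]
    rcases m with _ | m
    · simp [leg_zero, leg_one]
    · have h2 := leg_diff_deriv m
      rw [derivative_sub, sub_eq_iff_eq_add] at h2
      rw [h2, map_add, map_smul, leg_orth (m + 1) (derivative (legendre m))]
      · push_cast; simp
      · rw [natDegree_derivative, leg_natDegree]; omega

/-- `φ_{k+1}` as a polynomial. -/
noncomputable def Phi (k : ℕ) : ℝ[X] :=
  Real.sqrt ((2 * ((k : ℝ) + 1) + 1) / 2) • legendre (k + 1)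

/-- `ψ_{k+2}` as a polynomial. -/
noncomputable def Psi (k : ℕ) : ℝ[X] :=
  (Real.sqrt (2 * (2 * ((k : ℝ) + 1) + 1)))⁻¹ • (legendre (k + 2) - legendre k)

lemma phiF_eq (k : ℕ) : phiF (k + 1) = fun x => (Phi k).eval x := by
  funext x; simp [phiF, Phi, eval_smul]

lemma psiF_eq (k : ℕ) (x : ℝ) : psiF (k + 1) x = (Psi k).eval x := by
  simp [psiF, Psi, eval_smul]

lemma Psi_deriv (k : ℕ) : derivative (Psi k) = Phi k := by
  rw [Psi, Phi, derivative_smul, leg_diff_deriv, smul_smul]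
  congr 1
  set a : ℝ := 2 * ((k : ℝ) + 1) + 1 with ha
  have hpos : 0 < a := by positivity
  rw [Real.sqrt_div hpos.le, Real.sqrt_mul (by norm_num)]
  have h2 : Real.sqrt 2 ≠ 0 := by positivity
  have h3 : Real.sqrt a ≠ 0 := by positivity
  field_simp
  exact (Real.sq_sqrt hpos.le).symm

lemma Psi_eval (k : ℕ) (a : ℝ) (ha : a ^ 2 = 1) : (Psi k).eval a = 0 := by
  rw [Psi, eval_smul, leg_diff_eval k a ha, smul_zero]

lemma Phi_orth (i j : ℕ) : ipL (Phi i) (Phi j) = if i = j then 1 else 0 := by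
  rw [Phi, Phi, map_smul, map_smul, LinearMap.smul_apply]
  split_ifs with h
  · subst h
    have hn := leg_norm (i + 1)
    push_cast at hn
    rw [smul_smul, Real.mul_self_sqrt (by positivity), smul_eq_mul]
    linarith
  · rcases lt_or_gt_of_ne h with h | h
    · rw [ipL_comm, leg_orth _ _ (by rw [leg_natDegree]; omega)]; simp
    · rw [leg_orth _ _ (by rw [leg_natDegree]; omega)]; simp

lemma Psi_dPhi (i j : ℕ) : ipL (Psi i) (derivative (Phi j)) = if i = j then -1 else 0 := by
  have h := ipL_parts (Psi i) (Phi j) (Psi_eval i 1 (by norm_num)) (Psi_eval i (-1) (by norm_num))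
  rw [Psi_deriv, Phi_orth] at h
  split_ifs at h ⊢ <;> linarith

lemma Phi_natDegree (k : ℕ) : (Phi k).natDegree = k + 1 := by
  rw [Phi, natDegree_smul _ (by positivity), leg_natDegree]

lemma Psi_natDegree (k : ℕ) : (Psi k).natDegree = k + 2 := by
  have h := natDegree_derivative (Psi k)
  rw [Psi_deriv, Phi_natDegree] at h
  omega

/-- The derivatives of the `φ`'s form a polynomial sequence. -/
noncomputable def dPhiSeq : Polynomial.Sequence ℝ where
  elems' k := derivative (Phi k)
  degree_eq' k := by
    rw [degree_derivative (by rw [Phi_natDegree]; omega), Phi_natDegree]; simp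

lemma exists_expand (K : ℕ) (p : ℝ[X]) (hp : p.natDegree < K) :
    ∃ c : Fin K → ℝ, p = ∑ k, c k • derivative (Phi k) := by
  have h := dPhiSeq.span_degreeLT (m := K) (fun i _ => by
    simpa using dPhiSeq.ne_zero i)
  have hmem : p ∈ degreeLT ℝ K := by
    rw [mem_degreeLT]
    exact lt_of_le_of_lt degree_le_natDegree (by exact_mod_cast hp)
  rw [← h] at hmem
  have hr : (dPhiSeq '' Set.Iio K) = Set.range (fun k : Fin K => derivative (Phi k)) := by
    ext q
    constructor
    · rintro ⟨i, hi, rfl⟩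
      exact ⟨⟨i, hi⟩, rfl⟩
    · rintro ⟨i, rfl⟩
      exact ⟨i, i.2, rfl⟩
  rw [hr, Submodule.mem_span_range_iff_exists_fun] at hmem
  obtain ⟨c, hc⟩ := hmem
  exact ⟨c, hc.symm⟩

lemma expand (K : ℕ) (p : ℝ[X]) (hp : p.natDegree < K) :
    p = ∑ k : Fin K, (- ipL (Psi k) p) • derivative (Phi k) := by
  obtain ⟨c, hc⟩ := exists_expand K p hp
  have : ∀ k : Fin K, c k = - ipL (Psi k) p := by
    intro k
    rw [hc, map_sum]
    simp only [map_smul, Psi_dPhi, smul_eq_mul, ← Fin.ext_iff]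
    simp
  simp only [← this]
  exact hc

lemma mass_apply (N : ℕ) (i j : Fin (N - 1)) : massMatrix N i j = ipL (Psi j) (Psi i) := by
  simp [massMatrix, psiF_eq, ipL_apply]

lemma stiff_apply (N : ℕ) (i j : Fin (N - 1)) :
    stiffMatrix N i j = ipL (derivative (Phi j)) (derivative (Phi i)) := by
  simp only [stiffMatrix, Matrix.of_apply, phiF_eq, ipL_apply, Polynomial.deriv]

lemma stiff_mul_mass (N : ℕ) (i j : Fin (N - 1)) (hj : (j : ℕ) < N - 3) :
    (stiffMatrix N * massMatrix N) i j = (1 : Matrix (Fin (N - 1)) (Fin (N - 1)) ℝ) i j := by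
  have h := expand (N - 1) (Psi j) (by rw [Psi_natDegree]; omega)
  have h2 := congrArg (fun p => - ipL p (derivative (Phi i))) h
  simp only [map_sum, map_smul, LinearMap.sum_apply, LinearMap.smul_apply, smul_eq_mul,
    Psi_dPhi, map_neg, LinearMap.neg_apply] at h2
  rw [Matrix.mul_apply]
  simp only [mass_apply, stiff_apply, Matrix.one_apply]
  have e : (if i = j then (1 : ℝ) else 0) = -(if (j : ℕ) = i then -1 else 0) := by
    by_cases hij : i = j
    · simp [hij]
    · have : (j : ℕ) ≠ i := fun h => hij (Fin.ext h.symm)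
      simp [hij, this]
  rw [e, h2, ← Finset.sum_neg_distrib]
  refine Finset.sum_congr rfl fun k _ => ?_
  rw [ipL_comm (Psi j) (Psi k)]
  ring

lemma mass_unit (N : ℕ) : IsUnit (massMatrix N).det := by
  rw [isUnit_iff_ne_zero]
  intro h0
  obtain ⟨v, hv, hMv⟩ := Matrix.exists_mulVec_eq_zero_iff.2 h0
  apply hv
  set p : ℝ[X] := ∑ k : Fin (N - 1), v k • Psi k with hp
  have h1 : ∀ i : Fin (N - 1), ipL p (Psi i) = 0 := by
    intro i
    have := congrFun hMv i
    simp only [Matrix.mulVec, dotProduct, mass_apply, Pi.zero_apply] at this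
    rw [hp, map_sum, LinearMap.sum_apply, ← this]
    refine Finset.sum_congr rfl fun k _ => ?_
    simp [mul_comm]
  have h2 : ipL p p = 0 := by
    have : ipL p (∑ k : Fin (N - 1), v k • Psi k) = 0 := by
      rw [map_sum]
      simp only [map_smul, h1, smul_zero, Finset.sum_const_zero]
    rwa [← hp] at this
  have h3 := ipL_self_eq_zero p h2
  funext j
  have h4 : ipL p (derivative (Phi j)) = 0 := by rw [h3]; simp
  rw [hp, map_sum, LinearMap.sum_apply] at h4
  simp only [map_smul, LinearMap.smul_apply, Psi_dPhi, smul_eq_mul, ← Fin.ext_iff] at h4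
  simpa using h4

open scoped Kronecker

lemma block_mul {n r : Type*} [Fintype n] [DecidableEq n] [Fintype r] [DecidableEq r]
    (A B C : Matrix n n ℝ) (P : Matrix n r ℝ) :
    (A ⊗ₖ (B ⊗ₖ C)) * (P ⊗ₖ (P ⊗ₖ P)) = (A * P) ⊗ₖ ((B * P) ⊗ₖ (C * P)) := by
  rw [← Matrix.mul_kronecker_mul, ← Matrix.mul_kronecker_mul]

theorem eigenspace_one_dim_ge_3d (N : ℕ) (hN : 4 ≤ N) (κ : ℝ) :
    2 * (N - 3) ^ 3 ≤
      Module.finrank ℝ ↥(LinearMap.ker (Matrix.toLin'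
        (interiorBlock N κ (stiffMatrix N) - interiorBlock N κ (massMatrix N)⁻¹))) := by
  have hM := mass_unit N
  set M := massMatrix N with hMdef
  set f : Fin (N - 3) → Fin (N - 1) := Fin.castLE (by omega) with hf
  set E : Matrix (Fin (N - 1)) (Fin (N - 3)) ℝ :=
    (1 : Matrix (Fin (N - 1)) (Fin (N - 1)) ℝ).submatrix id f with hE
  set P := M * E with hP
  have hSP : stiffMatrix N * P = M⁻¹ * P := by
    rw [hP, ← Matrix.mul_assoc, ← Matrix.mul_assoc, Matrix.nonsing_inv_mul _ hM, Matrix.one_mul]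
    ext i j
    have h := stiff_mul_mass N i (f j) j.2
    have : (stiffMatrix N * M * E) i j = (stiffMatrix N * M) i (f j) := by
      rw [Matrix.mul_apply]
      simp [hE, Matrix.one_apply]
    rw [this, hMdef, h]
    rfl
  have hLP : (E.transpose * M⁻¹) * P = 1 := by
    rw [hP, Matrix.mul_assoc, ← Matrix.mul_assoc M⁻¹, Matrix.nonsing_inv_mul _ hM, Matrix.one_mul]
    ext i j
    rw [Matrix.mul_apply]
    have hfi : ∀ i j, f i = f j ↔ i = j := fun i j => by simp [hf]
    simp only [hE, Matrix.transpose_apply, Matrix.submatrix_apply, id, Matrix.one_apply]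
    simp only [ite_mul, one_mul, zero_mul, Finset.sum_ite_eq', Finset.mem_univ, if_true, hfi]
  set Q3 := P ⊗ₖ (P ⊗ₖ P) with hQ3
  set L := E.transpose * M⁻¹ with hL
  have hL3 : (L ⊗ₖ (L ⊗ₖ L)) * Q3 = 1 := by
    rw [hQ3, ← Matrix.mul_kronecker_mul, ← Matrix.mul_kronecker_mul, hLP]
    simp
  set Q := Matrix.fromBlocks Q3 0 0 Q3 with hQ
  have hLQ : Matrix.fromBlocks (L ⊗ₖ (L ⊗ₖ L)) 0 0 (L ⊗ₖ (L ⊗ₖ L)) * Q = 1 := by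
    rw [hQ, Matrix.fromBlocks_multiply]
    simp [hL3]
  have hAQ : (interiorBlock N κ (stiffMatrix N) - interiorBlock N κ M⁻¹) * Q = 0 := by
    rw [Matrix.sub_mul, sub_eq_zero, hQ]
    simp only [interiorBlock, Matrix.fromBlocks_multiply, ← hMdef, Matrix.mul_zero, add_zero,
      zero_add, Matrix.add_mul, Matrix.smul_mul, hQ3, block_mul, hSP]
  set Amat := interiorBlock N κ (stiffMatrix N) - interiorBlock N κ M⁻¹
  have hinj : Function.Injective (Matrix.toLin' Q) := by
    apply Function.LeftInverse.injective
      (g := Matrix.toLin' (Matrix.fromBlocks (L ⊗ₖ (L ⊗ₖ L)) 0 0 (L ⊗ₖ (L ⊗ₖ L))))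
    intro x
    rw [← Matrix.toLin'_mul_apply, hLQ]
    simp
  have hmem : ∀ x, Matrix.toLin' Q x ∈ LinearMap.ker (Matrix.toLin' Amat) := by
    intro x
    rw [LinearMap.mem_ker, ← Matrix.toLin'_mul_apply, hAQ]
    simp
  have := LinearMap.finrank_le_finrank_of_injective
    (f := LinearMap.codRestrict _ (Matrix.toLin' Q) hmem)
    (fun x y h => hinj (congrArg Subtype.val h))
  refine le_trans (le_of_eq ?_) this
  simp
  ring
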